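/- Let A be a set with a length function μ. For any w ∈ F_ℝ(A) and any word 𝐰 in the alphabet {a(r) : a ∈ A, r ∈ ℝ} representing it, ‖w‖_{F_ℝ(A;μ)} = lim_{t→∞} (1/t)·‖𝐰[t]‖_{F(A;μ)}. -/

import Mathlib

/-!
The word norm is the largest conjugation-invariant seminorm bounded by the given lengths on the
generators, which gives the lower bound: for `t > 0` the pull-back of `t * ‖·‖_{F_ℝ(A;μ)}` along
`F(A) → F_ℝ(A)`, `a ↦ a(1/t)`, is such a seminorm on `F(A)`. This map sends `𝐰[t]` to
`∏ aᵢ(⟦t rᵢ⟧/t)`, which lies within `K/t` of `w`, so `t ‖w‖ ≤ ‖𝐰[t]‖ + K`.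

For the upper bound, rounding is additive up to a bounded error, so `a(r) ↦ (t ↦ a^⟦t r⟧)` extends
to a homomorphism from `F_ℝ(A)` to the functions `ℝ → F(A)` modulo the normal subgroup of bounded
ones, under which `w` maps to the class of `t ↦ 𝐰[t]`. An expression of `w` of total length `x`
yields another representative of this class, of norm at most `t x` at time `t`. Hence
`‖𝐰[t]‖ ≤ t x + C`.
-/

open Filter

/-- The set of total lengths of expressions of `g` as a product of conjugates
of generators `gen i ^ {±1}`, each weighted by the length function `ℓ`. -/
def wordNormSet {G : Type*} [Group G] {I : Type*}
    (gen : I → G) (ℓ : I → ℝ) (g : G) : Set ℝ :=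
  { x | ∃ l : List (G × I × Bool),
      g = (l.map fun p => p.1 * (if p.2.2 then gen p.2.1 else (gen p.2.1)⁻¹) * p.1⁻¹).prod ∧
      x = (l.map fun p => ℓ p.2.1).sum }

/-- The conjugation-invariant word norm associated to a length function. -/
noncomputable def wordNorm {G : Type*} [Group G] {I : Type*}
    (gen : I → G) (ℓ : I → ℝ) (g : G) : ℝ :=
  sInf (wordNormSet gen ℓ g)

/-- `F_ℝ(A)`: the free product of copies of `ℝ` indexed by `A`. -/
abbrev FR (A : Type*) : Type _ := Monoid.CoprodI (fun _ : A => Multiplicative ℝ)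

/-- The generator `a(r)` of `F_ℝ(A)`. -/
def genFR (A : Type*) (p : A × ℝ) : FR A :=
  Monoid.CoprodI.of (i := p.1) (Multiplicative.ofAdd p.2)

/-- The conjugation-invariant word norm `‖·‖_{F_ℝ(A;μ)}`. -/
noncomputable def FRnorm {A : Type*} (μ : A → ℝ) : FR A → ℝ :=
  wordNorm (genFR A) (fun p => |p.2| * μ p.1)

/-- `⟦x⟧`: the floor of `x` for `x ≥ 0`, the ceiling of `x` for `x ≤ 0`. -/
noncomputable def myfloor (x : ℝ) : ℤ := if 0 ≤ x then ⌊x⌋ else ⌈x⌉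

/-- The element of `F_ℝ(A)` represented by the word `𝐰 = a₁(r₁)⋯a_k(r_k)`. -/
def wordProd {A : Type*} (l : List (A × ℝ)) : FR A :=
  (l.map (genFR A)).prod

/-- The truncation `𝐰[t] = a₁^{⟦t r₁⟧} ⋯ a_k^{⟦t r_k⟧}` as an element of the
free group `F(A)`. -/
noncomputable def truncFG {A : Type*} (l : List (A × ℝ)) (t : ℝ) : FreeGroup A :=
  (l.map fun p => FreeGroup.of p.1 ^ (myfloor (t * p.2))).prod

/-! ### Conjugation-invariant seminorms -/

section ConjInvariant

variable {G : Type*} [Group G]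

/-- Invariance of a seminorm on a group under conjugation. It is a class so that normality of
`boundedFunctions N T` is found by instance search. -/
class IsConjInvariant (N : GroupSeminorm G) : Prop where
  map_conj : ∀ k g : G, N (k * g * k⁻¹) = N g

lemma seminorm_zpow_le (N : GroupSeminorm G) (g : G) (n : ℤ) : N (g ^ n) ≤ |(n : ℝ)| * N g := by
  have seminorm_pow_le (m : ℕ) : N (g ^ m) ≤ m * N g := by
    induction m with
    | zero => simp
    | succ m ih =>
      rw [pow_succ, Nat.cast_succ, add_one_mul]
      exact (map_mul_le_add N _ _).trans (by gcongr)
  obtain ⟨m, rfl | rfl⟩ := n.eq_nat_or_neg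
  · simpa using seminorm_pow_le m
  · simpa using seminorm_pow_le m

lemma seminorm_prod_inv_mul_prod_le (N : GroupSeminorm G) [IsConjInvariant N] {ι : Type*}
    (f g : ι → G) (l : List ι) :
    N ((l.map f).prod⁻¹ * (l.map g).prod) ≤ (l.map fun i => N ((f i)⁻¹ * g i)).sum := by
  induction l with
  | nil => simp
  | cons i l ih =>
    simp only [List.map_cons, List.prod_cons, List.sum_cons]
    set F := (l.map f).prod
    set H := (l.map g).prod
    calc N ((f i * F)⁻¹ * (g i * H))
        = N (F⁻¹ * ((f i)⁻¹ * g i) * F⁻¹⁻¹ * (F⁻¹ * H)) := by group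
      _ ≤ N (F⁻¹ * ((f i)⁻¹ * g i) * F⁻¹⁻¹) + N (F⁻¹ * H) := map_mul_le_add N _ _
      _ ≤ N ((f i)⁻¹ * g i) + (l.map fun i => N ((f i)⁻¹ * g i)).sum := by
        rw [IsConjInvariant.map_conj]; gcongr

end ConjInvariant

/-! ### The word norm -/

section WordNorm

variable {G : Type*} [Group G] {I : Type*} {gen : I → G} {ℓ : I → ℝ} {g h : G} {x y : ℝ}

lemma zero_mem_wordNormSet_one : (0 : ℝ) ∈ wordNormSet gen ℓ 1 := ⟨[], by simp, by simp⟩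

lemma mem_wordNormSet_gen (i : I) : ℓ i ∈ wordNormSet gen ℓ (gen i) :=
  ⟨[(1, i, true)], by simp, by simp⟩

lemma add_mem_wordNormSet_mul (hx : x ∈ wordNormSet gen ℓ g) (hy : y ∈ wordNormSet gen ℓ h) :
    x + y ∈ wordNormSet gen ℓ (g * h) := by
  obtain ⟨l, rfl, rfl⟩ := hx
  obtain ⟨m, rfl, rfl⟩ := hy
  exact ⟨l ++ m, by simp, by simp⟩

lemma mem_wordNormSet_inv (hx : x ∈ wordNormSet gen ℓ g) : x ∈ wordNormSet gen ℓ g⁻¹ := by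
  obtain ⟨l, rfl, rfl⟩ := hx
  refine ⟨(l.map fun p => (p.1, p.2.1, !p.2.2)).reverse, ?_, ?_⟩
  · rw [List.prod_inv_reverse, List.map_reverse, List.map_map, List.map_map]
    congr! 3
    funext ⟨k, i, b⟩
    cases b <;> simp [mul_assoc]
  · simp [Function.comp_def]

lemma mem_wordNormSet_conj (k : G) (hx : x ∈ wordNormSet gen ℓ g) :
    x ∈ wordNormSet gen ℓ (k * g * k⁻¹) := by
  obtain ⟨l, rfl, rfl⟩ := hx
  refine ⟨l.map fun p => (k * p.1, p.2), ?_, ?_⟩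
  · rw [← MulAut.conj_apply, map_list_prod]
    simp [Function.comp_def, mul_assoc]
  · simp [Function.comp_def]

lemma mem_wordNormSet_conj_iff (k : G) :
    x ∈ wordNormSet gen ℓ (k * g * k⁻¹) ↔ x ∈ wordNormSet gen ℓ g :=
  ⟨fun hx => by simpa [mul_assoc] using mem_wordNormSet_conj k⁻¹ hx, mem_wordNormSet_conj k⟩

lemma wordNormSet_induction {motive : G → ℝ → Prop} (one : motive 1 0)
    (gen_mem : ∀ i, motive (gen i) (ℓ i))
    (inv : ∀ g x, motive g x → motive g⁻¹ x)
    (conj : ∀ k g x, motive g x → motive (k * g * k⁻¹) x)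
    (mul : ∀ g h x y, motive g x → motive h y → motive (g * h) (x + y))
    (hx : x ∈ wordNormSet gen ℓ g) : motive g x := by
  obtain ⟨l, rfl, rfl⟩ := hx
  induction l with
  | nil => exact one
  | cons p l ih =>
    simp only [List.map_cons, List.prod_cons, List.sum_cons]
    refine mul _ _ _ _ (conj _ _ _ ?_) ih
    split_ifs
    · exact gen_mem _
    · exact inv _ _ (gen_mem _)

lemma wordNormSet_nonempty (hgen : Subgroup.normalClosure (Set.range gen) = ⊤) (ℓ : I → ℝ)
    (g : G) : (wordNormSet gen ℓ g).Nonempty := by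
  let expressible : Subgroup G :=
    { carrier := {g | (wordNormSet gen ℓ g).Nonempty}
      one_mem' := ⟨0, zero_mem_wordNormSet_one⟩
      mul_mem' := fun ⟨_, hx⟩ ⟨_, hy⟩ => ⟨_, add_mem_wordNormSet_mul hx hy⟩
      inv_mem' := fun ⟨_, hx⟩ => ⟨_, mem_wordNormSet_inv hx⟩ }
  have : expressible.Normal := ⟨fun _ ⟨_, hx⟩ k => ⟨_, mem_wordNormSet_conj k hx⟩⟩
  have gen_mem : Set.range gen ⊆ expressible :=
    Set.range_subset_iff.2 fun i => ⟨_, mem_wordNormSet_gen i⟩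
  exact Subgroup.normalClosure_le_normal gen_mem (hgen ▸ Subgroup.mem_top g)

lemma nonneg_of_mem_wordNormSet (hℓ : ∀ i, 0 ≤ ℓ i) (hx : x ∈ wordNormSet gen ℓ g) : 0 ≤ x :=
  wordNormSet_induction (motive := fun _ x => 0 ≤ x) le_rfl hℓ (fun _ _ => id) (fun _ _ _ => id)
    (fun _ _ _ _ => add_nonneg) hx

lemma wordNorm_le_of_mem (hℓ : ∀ i, 0 ≤ ℓ i) (hx : x ∈ wordNormSet gen ℓ g) :
    wordNorm gen ℓ g ≤ x :=
  csInf_le ⟨0, fun _ => nonneg_of_mem_wordNormSet hℓ⟩ hx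

lemma wordNorm_mul_le (hgen : Subgroup.normalClosure (Set.range gen) = ⊤) (hℓ : ∀ i, 0 ≤ ℓ i)
    (g h : G) : wordNorm gen ℓ (g * h) ≤ wordNorm gen ℓ g + wordNorm gen ℓ h := by
  refine sub_le_iff_le_add.1 <| le_csInf (wordNormSet_nonempty hgen ℓ g) fun x hx => ?_
  refine sub_le_comm.1 <| le_csInf (wordNormSet_nonempty hgen ℓ h) fun y hy => ?_
  exact sub_le_iff_le_add'.2 <| wordNorm_le_of_mem hℓ (add_mem_wordNormSet_mul hx hy)

/-- The conjugation-invariant word norm `wordNorm gen ℓ` as a bundled seminorm. Normal generation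
ensures that no value is the infimum of the empty set. -/
noncomputable def wordSeminorm (hgen : Subgroup.normalClosure (Set.range gen) = ⊤)
    (hℓ : ∀ i, 0 ≤ ℓ i) : GroupSeminorm G where
  toFun := wordNorm gen ℓ
  map_one' := le_antisymm (wordNorm_le_of_mem hℓ zero_mem_wordNormSet_one)
    (Real.sInf_nonneg fun _ => nonneg_of_mem_wordNormSet hℓ)
  mul_le' := wordNorm_mul_le hgen hℓ
  inv' g := congrArg sInf <| Set.ext fun _ =>
    ⟨fun hx => inv_inv g ▸ mem_wordNormSet_inv hx, mem_wordNormSet_inv⟩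

instance (hgen : Subgroup.normalClosure (Set.range gen) = ⊤) (hℓ : ∀ i, 0 ≤ ℓ i) :
    IsConjInvariant (wordSeminorm hgen hℓ) where
  map_conj k _ := congrArg sInf <| Set.ext fun _ => mem_wordNormSet_conj_iff k

lemma wordSeminorm_gen_le (hgen : Subgroup.normalClosure (Set.range gen) = ⊤)
    (hℓ : ∀ i, 0 ≤ ℓ i) (i : I) : wordSeminorm hgen hℓ (gen i) ≤ ℓ i :=
  wordNorm_le_of_mem hℓ (mem_wordNormSet_gen i)

lemma mul_seminorm_le_wordNorm (hgen : Subgroup.normalClosure (Set.range gen) = ⊤)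
    (N : GroupSeminorm G) [IsConjInvariant N] {c : ℝ} (hc : 0 ≤ c)
    (hN : ∀ i, c * N (gen i) ≤ ℓ i) (g : G) : c * N g ≤ wordNorm gen ℓ g := by
  refine le_csInf (wordNormSet_nonempty hgen ℓ g) fun x hx => ?_
  refine wordNormSet_induction (motive := fun g x => c * N g ≤ x) (by simp) hN ?_ ?_ ?_ hx
  · exact fun g x hg => (map_inv_eq_map N g).symm ▸ hg
  · exact fun k g x hg => (IsConjInvariant.map_conj (N := N) k g).symm ▸ hg
  · intro g h x y hg hh
    calc c * N (g * h) ≤ c * (N g + N h) := by gcongr; exact map_mul_le_add N g h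
      _ ≤ x + y := by rw [mul_add]; gcongr

end WordNorm

/-! ### Functions modulo bounded functions -/

section BoundedFunctions

variable {G H I : Type*} [Group G] [Group H] {N : GroupSeminorm H} {T : Type*}

/-- The subgroup of functions `T → H` along which the seminorm `N` is bounded. Its quotient is the
group of functions `T → H` up to bounded error. -/
def boundedFunctions (N : GroupSeminorm H) (T : Type*) : Subgroup (T → H) where
  carrier := {f | ∃ C, ∀ t, N (f t) ≤ C}
  one_mem' := ⟨0, by simp⟩
  mul_mem' := fun ⟨C, hC⟩ ⟨D, hD⟩ =>
    ⟨C + D, fun t => (map_mul_le_add N _ _).trans (add_le_add (hC t) (hD t))⟩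
  inv_mem' := fun ⟨C, hC⟩ => ⟨C, fun t => (map_inv_eq_map N _).trans_le (hC t)⟩

variable [IsConjInvariant N]

instance : (boundedFunctions N T).Normal where
  conj_mem := fun _ ⟨C, hC⟩ _ => ⟨C, fun t => (IsConjInvariant.map_conj _ _).trans_le (hC t)⟩

variable {gen : I → G} {ℓ : I → ℝ} {φ : G →* (T → H) ⧸ boundedFunctions N T} {s : T → ℝ}
  {g : G} {x : ℝ}

lemma exists_lift_le_of_mem_wordNormSet
    (hgen : ∀ i, ∃ f : T → H, (f : (T → H) ⧸ boundedFunctions N T) = φ (gen i) ∧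
      ∀ t, N (f t) ≤ s t * ℓ i)
    (hx : x ∈ wordNormSet gen ℓ g) :
    ∃ f : T → H, (f : (T → H) ⧸ boundedFunctions N T) = φ g ∧ ∀ t, N (f t) ≤ s t * x := by
  refine wordNormSet_induction (motive := fun g x => ∃ f : T → H,
    (f : (T → H) ⧸ boundedFunctions N T) = φ g ∧ ∀ t, N (f t) ≤ s t * x) ?_ hgen ?_ ?_ ?_ hx
  · exact ⟨1, by simp, by simp⟩
  · rintro g x ⟨f, hf, hfx⟩
    exact ⟨f⁻¹, by simp [hf], by simpa using hfx⟩
  · rintro k g x ⟨f, hf, hfx⟩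
    obtain ⟨c, hc⟩ := QuotientGroup.mk_surjective (φ k)
    exact ⟨c * f * c⁻¹, by simp [hf, hc],
      fun t => (IsConjInvariant.map_conj _ _).trans_le (hfx t)⟩
  · rintro g₁ g₂ x₁ x₂ ⟨f₁, hf₁, hx₁⟩ ⟨f₂, hf₂, hx₂⟩
    refine ⟨f₁ * f₂, by simp [hf₁, hf₂], fun t => (map_mul_le_add N _ _).trans ?_⟩
    rw [mul_add]
    exact add_le_add (hx₁ t) (hx₂ t)

lemma exists_seminorm_le_mul_add_of_mem_wordNormSet
    (hgen : ∀ i, ∃ f : T → H, (f : (T → H) ⧸ boundedFunctions N T) = φ (gen i) ∧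
      ∀ t, N (f t) ≤ s t * ℓ i)
    {f : T → H} (hf : (f : (T → H) ⧸ boundedFunctions N T) = φ g)
    (hx : x ∈ wordNormSet gen ℓ g) :
    ∃ C, ∀ t, N (f t) ≤ s t * x + C := by
  obtain ⟨f', hf', hf'x⟩ := exists_lift_le_of_mem_wordNormSet hgen hx
  obtain ⟨C, hC⟩ := QuotientGroup.eq.1 (hf'.trans hf.symm)
  refine ⟨C, fun t => ?_⟩
  calc N (f t) = N (f' t * (f'⁻¹ * f) t) := by simp
    _ ≤ N (f' t) + N ((f'⁻¹ * f) t) := map_mul_le_add N _ _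
    _ ≤ s t * x + C := add_le_add (hf'x t) (hC t)

end BoundedFunctions

/-! ### Rounding and limits -/

lemma abs_myfloor_le (x : ℝ) : |(myfloor x : ℝ)| ≤ |x| := by
  unfold myfloor
  split_ifs with hx
  · rw [abs_of_nonneg hx, abs_of_nonneg (mod_cast Int.floor_nonneg.2 hx)]
    exact Int.floor_le x
  · have hx := (not_le.1 hx).le
    rw [abs_of_nonpos hx, abs_of_nonpos (mod_cast Int.ceil_nonpos.2 hx)]
    exact neg_le_neg (Int.le_ceil x)

lemma abs_sub_myfloor_le_one (x : ℝ) : |x - myfloor x| ≤ 1 := by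
  unfold myfloor
  rw [abs_le]
  split_ifs
  · constructor <;> linarith [Int.floor_le x, Int.lt_floor_add_one x]
  · constructor <;> linarith [Int.le_ceil x, Int.ceil_lt_add_one x]

lemma abs_myfloor_add_sub_le (x y : ℝ) :
    |(myfloor (x + y) - myfloor x - myfloor y : ℝ)| ≤ 3 := by
  have hx := abs_le.1 (abs_sub_myfloor_le_one x)
  have hy := abs_le.1 (abs_sub_myfloor_le_one y)
  have hxy := abs_le.1 (abs_sub_myfloor_le_one (x + y))
  exact abs_le.2 ⟨by linarith, by linarith⟩

lemma tendsto_one_div_mul_sInf {S : Set ℝ} (hS : S.Nonempty) {u : ℝ → ℝ} {K : ℝ}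
    (hlower : ∀ t > 0, t * sInf S ≤ u t + K)
    (hupper : ∀ x ∈ S, ∃ C, ∀ t > 0, u t ≤ t * x + C) :
    Tendsto (fun t => (1 / t) * u t) atTop (nhds (sInf S)) := by
  have tendsto_div (C : ℝ) : Tendsto (fun t : ℝ => C / t) atTop (nhds 0) :=
    tendsto_const_nhds.div_atTop tendsto_id
  refine tendsto_order.2 ⟨fun b hb => ?_, fun b hb => ?_⟩
  · filter_upwards [eventually_gt_atTop 0, (tendsto_div K).eventually_lt_const (sub_pos.2 hb)]
      with t ht hKt
    calc b < sInf S - K / t := by linarith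
      _ = (1 / t) * (t * sInf S - K) := by field_simp
      _ ≤ (1 / t) * u t := by gcongr; linarith [hlower t ht]
  · obtain ⟨x, hx, hxb⟩ := exists_lt_of_csInf_lt hS hb
    obtain ⟨C, hC⟩ := hupper x hx
    filter_upwards [eventually_gt_atTop 0, (tendsto_div C).eventually_lt_const (sub_pos.2 hxb)]
      with t ht hCt
    calc (1 / t) * u t ≤ (1 / t) * (t * x + C) := by gcongr; exact hC t ht
      _ = x + C / t := by field_simp
      _ < b := by linarith

/-! ### The seminorms of `F(A)` and `F_ℝ(A)` -/

section FreeGroups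

variable {A : Type*}

lemma genFR_zpow (a : A) (r : ℝ) (n : ℤ) : genFR A (a, r) ^ n = genFR A (a, n * r) := by
  simp [genFR, ← map_zpow, ← ofAdd_zsmul]

lemma genFR_inv_mul_genFR (a : A) (r s : ℝ) :
    (genFR A (a, r))⁻¹ * genFR A (a, s) = genFR A (a, s - r) := by
  simp [genFR, ← map_inv, ← map_mul, ← ofAdd_neg, ← ofAdd_add, neg_add_eq_sub]

lemma normalClosure_range_freeGroup_of :
    Subgroup.normalClosure (Set.range (FreeGroup.of (α := A))) = ⊤ :=
  top_le_iff.1 <| FreeGroup.closure_range_of A ▸ Subgroup.closure_le_normalClosure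

lemma normalClosure_range_genFR : Subgroup.normalClosure (Set.range (genFR A)) = ⊤ := by
  refine eq_top_iff.2 fun w _ => ?_
  induction w using Monoid.CoprodI.induction_on with
  | one => exact one_mem _
  | of a r => exact Subgroup.subset_normalClosure ⟨(a, r.toAdd), rfl⟩
  | mul w₁ w₂ h₁ h₂ => exact mul_mem (h₁ trivial) (h₂ trivial)

variable {μ : A → ℝ} (hμ : ∀ a, 0 ≤ μ a)

/-- The norm `‖·‖_{F(A;μ)}` as a bundled seminorm. -/
noncomputable def freeSeminorm : GroupSeminorm (FreeGroup A) :=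
  wordSeminorm normalClosure_range_freeGroup_of hμ

instance : IsConjInvariant (freeSeminorm hμ) :=
  inferInstanceAs (IsConjInvariant (wordSeminorm _ _))

/-- The norm `‖·‖_{F_ℝ(A;μ)}` as a bundled seminorm. -/
noncomputable def FRSeminorm : GroupSeminorm (FR A) :=
  wordSeminorm (ℓ := fun p : A × ℝ => |p.2| * μ p.1) normalClosure_range_genFR
    fun p => mul_nonneg (abs_nonneg p.2) (hμ p.1)

instance : IsConjInvariant (FRSeminorm hμ) :=
  inferInstanceAs (IsConjInvariant (wordSeminorm _ _))

lemma freeSeminorm_of_zpow_le (a : A) (n : ℤ) :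
    freeSeminorm hμ (FreeGroup.of a ^ n) ≤ |(n : ℝ)| * μ a :=
  (seminorm_zpow_le _ _ n).trans <|
    mul_le_mul_of_nonneg_left (wordSeminorm_gen_le _ hμ a) (abs_nonneg _)

lemma FRSeminorm_genFR_le (a : A) (r : ℝ) : FRSeminorm hμ (genFR A (a, r)) ≤ |r| * μ a :=
  wordSeminorm_gen_le normalClosure_range_genFR _ (a, r)

/-! ### The lower bound -/

/-- The homomorphism `F(A) → F_ℝ(A)` with `a ↦ a(r)`. For `r = 1/t` it takes the truncation `𝐰[t]`
back to an approximation of `w`. -/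
def rescale (r : ℝ) : FreeGroup A →* FR A := FreeGroup.lift fun a => genFR A (a, r)

lemma mul_FRSeminorm_rescale_le {t : ℝ} (ht : 0 < t) (g : FreeGroup A) :
    t * FRSeminorm hμ (rescale t⁻¹ g) ≤ freeSeminorm hμ g := by
  let N : GroupSeminorm (FreeGroup A) := (FRSeminorm hμ).comp (rescale t⁻¹)
  have : IsConjInvariant N := ⟨fun k g => by simp [N, IsConjInvariant.map_conj]⟩
  refine mul_seminorm_le_wordNorm normalClosure_range_freeGroup_of N ht.le (fun a => ?_) g
  calc t * N (FreeGroup.of a) = t * FRSeminorm hμ (genFR A (a, t⁻¹)) := by simp [N, rescale]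
    _ ≤ t * (|t⁻¹| * μ a) := by gcongr; exact FRSeminorm_genFR_le hμ a t⁻¹
    _ = μ a := by rw [abs_of_pos (inv_pos.2 ht), mul_inv_cancel_left₀ ht.ne']

lemma rescale_truncFG (r : ℝ) (l : List (A × ℝ)) (t : ℝ) :
    rescale r (truncFG l t) = (l.map fun p => genFR A (p.1, myfloor (t * p.2) * r)).prod := by
  simp [truncFG, rescale, map_list_prod, Function.comp_def, genFR_zpow]

lemma mul_FRSeminorm_rescale_truncFG_inv_mul_le (l : List (A × ℝ)) {t : ℝ} (ht : 0 < t) :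
    t * FRSeminorm hμ ((rescale t⁻¹ (truncFG l t))⁻¹ * wordProd l) ≤
      (l.map fun p => μ p.1).sum := by
  have letter_le (p : A × ℝ) : t * FRSeminorm hμ
      ((genFR A (p.1, myfloor (t * p.2) * t⁻¹))⁻¹ * genFR A p) ≤ μ p.1 := by
    rw [genFR_inv_mul_genFR]
    calc t * FRSeminorm hμ (genFR A (p.1, p.2 - myfloor (t * p.2) * t⁻¹))
        ≤ t * (|p.2 - myfloor (t * p.2) * t⁻¹| * μ p.1) := by
          gcongr; exact FRSeminorm_genFR_le hμ _ _
      _ = |t * (p.2 - myfloor (t * p.2) * t⁻¹)| * μ p.1 := by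
          rw [abs_mul, abs_of_pos ht, mul_assoc]
      _ = |t * p.2 - myfloor (t * p.2)| * μ p.1 := by congr 2; field_simp
      _ ≤ μ p.1 := mul_le_of_le_one_left (hμ _) (abs_sub_myfloor_le_one _)
  rw [rescale_truncFG, wordProd]
  refine (mul_le_mul_of_nonneg_left (seminorm_prod_inv_mul_prod_le _ _ _ l) ht.le).trans ?_
  rw [← List.sum_map_mul_left]
  exact List.sum_le_sum fun p _ => letter_le p

lemma mul_FRSeminorm_wordProd_le (l : List (A × ℝ)) {t : ℝ} (ht : 0 < t) :
    t * FRSeminorm hμ (wordProd l) ≤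
      freeSeminorm hμ (truncFG l t) + (l.map fun p => μ p.1).sum := by
  set v := rescale t⁻¹ (truncFG l t)
  calc t * FRSeminorm hμ (wordProd l) = t * FRSeminorm hμ (v * (v⁻¹ * wordProd l)) := by simp
    _ ≤ t * (FRSeminorm hμ v + FRSeminorm hμ (v⁻¹ * wordProd l)) := by
        gcongr; exact map_mul_le_add _ _ _
    _ ≤ freeSeminorm hμ (truncFG l t) + (l.map fun p => μ p.1).sum := by
        rw [mul_add]
        exact add_le_add (mul_FRSeminorm_rescale_le hμ ht _)
          (mul_FRSeminorm_rescale_truncFG_inv_mul_le hμ l ht)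

/-! ### The upper bound -/

lemma mk_zpow_myfloor_mul_add (a : A) (r s : ℝ) :
    (QuotientGroup.mk fun t => FreeGroup.of a ^ myfloor (t * (r + s)) :
      (ℝ → FreeGroup A) ⧸ boundedFunctions (freeSeminorm hμ) ℝ) =
    QuotientGroup.mk (fun t => FreeGroup.of a ^ myfloor (t * r)) *
      QuotientGroup.mk (fun t => FreeGroup.of a ^ myfloor (t * s)) := by
  refine Eq.symm <| QuotientGroup.eq.2 ⟨3 * μ a, fun t => ?_⟩
  set n := myfloor (t * r + t * s) - myfloor (t * r) - myfloor (t * s) with hn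
  have abs_n_le : |(n : ℝ)| ≤ 3 := by
    simpa [hn] using abs_myfloor_add_sub_le (t * r) (t * s)
  calc freeSeminorm hμ ((FreeGroup.of a ^ myfloor (t * r) * FreeGroup.of a ^ myfloor (t * s))⁻¹ *
          FreeGroup.of a ^ myfloor (t * (r + s)))
      = freeSeminorm hμ (FreeGroup.of a ^ n) := by
        rw [← zpow_add, ← zpow_neg, ← zpow_add, mul_add, hn]
        congr 2
        ring
    _ ≤ |(n : ℝ)| * μ a := freeSeminorm_of_zpow_le hμ a n
    _ ≤ 3 * μ a := mul_le_mul_of_nonneg_right abs_n_le (hμ a)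

/-- The homomorphism sending `a(r)` to the class of `t ↦ a^⟦t r⟧`. It is well defined only up to
bounded functions because `⟦·⟧` is not additive. -/
noncomputable def truncHom : FR A →* (ℝ → FreeGroup A) ⧸ boundedFunctions (freeSeminorm hμ) ℝ :=
  Monoid.CoprodI.lift fun a => MonoidHom.mk'
    (fun r : Multiplicative ℝ => QuotientGroup.mk fun t => FreeGroup.of a ^ myfloor (t * r.toAdd))
    fun r s => mk_zpow_myfloor_mul_add hμ a r.toAdd s.toAdd

lemma truncHom_genFR (p : A × ℝ) :
    truncHom hμ (genFR A p) =
      QuotientGroup.mk fun t => FreeGroup.of p.1 ^ myfloor (t * p.2) := by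
  simp [truncHom, genFR]

lemma truncHom_wordProd (l : List (A × ℝ)) :
    truncHom hμ (wordProd l) = QuotientGroup.mk (truncFG l) := by
  have : truncFG l = (l.map fun p t => FreeGroup.of p.1 ^ myfloor (t * p.2)).prod := by
    funext t
    simp [truncFG, Pi.list_prod_apply, Function.comp_def]
  rw [this, wordProd, map_list_prod, List.map_map, ← QuotientGroup.mk'_apply, map_list_prod,
    List.map_map]
  exact congrArg List.prod (List.map_congr_left fun p _ => truncHom_genFR hμ p)

lemma exists_freeSeminorm_truncFG_le (l : List (A × ℝ)) {x : ℝ}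
    (hx : x ∈ wordNormSet (genFR A) (fun p => |p.2| * μ p.1) (wordProd l)) :
    ∃ C, ∀ t, freeSeminorm hμ (truncFG l t) ≤ |t| * x + C := by
  refine exists_seminorm_le_mul_add_of_mem_wordNormSet
    (fun p => ⟨_, (truncHom_genFR hμ p).symm, fun t => ?_⟩) (truncHom_wordProd hμ l).symm hx
  calc freeSeminorm hμ (FreeGroup.of p.1 ^ myfloor (t * p.2))
      ≤ |(myfloor (t * p.2) : ℝ)| * μ p.1 := freeSeminorm_of_zpow_le hμ _ _
    _ ≤ |t * p.2| * μ p.1 := mul_le_mul_of_nonneg_right (abs_myfloor_le _) (hμ _)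
    _ = |t| * (|p.2| * μ p.1) := by rw [abs_mul, mul_assoc]

end FreeGroups

/-- for any `w ∈ F_ℝ(A)` and any word `𝐰` representing it,
`‖w‖_{F_ℝ(A;μ)} = lim_{t→∞} (1/t)·‖𝐰[t]‖_{F(A;μ)}`. -/
theorem FRnorm_eq_lim_scaledTruncNorm
    {A : Type*} (μ : A → ℝ) (hμ : ∀ a, 0 ≤ μ a) (l : List (A × ℝ)) :
    Tendsto (fun t : ℝ => (1 / t) * wordNorm FreeGroup.of μ (truncFG l t))
      atTop (nhds (FRnorm μ (wordProd l))) := by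
  refine tendsto_one_div_mul_sInf (wordNormSet_nonempty normalClosure_range_genFR _ _)
    (fun t ht => mul_FRSeminorm_wordProd_le hμ l ht) fun x hx => ?_
  obtain ⟨C, hC⟩ := exists_freeSeminorm_truncFG_le hμ l hx
  exact ⟨C, fun t ht => (hC t).trans_eq (by rw [abs_of_pos ht])⟩
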